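/- For every z > −1 and every k ≤ n, the polynomial ∂_z^k L_n(x,z) (the k-th derivative of the generalized Laguerre polynomial with respect to its parameter), viewed as a polynomial in x, has degree n − k and all of its roots are real and simple. -/

import Mathlib

open Polynomial Finset

/-- The generalized Laguerre polynomial as a bivariate polynomial: the outer variable is
the parameter z, the inner coefficients are polynomials in x. -/
noncomputable def laguerreBiv (n : Nat) : Polynomial (Polynomial Real) :=
  Finset.sum (Finset.range (n + 1)) fun k =>
    Polynomial.C (Polynomial.C ((-1 : Real) ^ k / ((k.factorial : Real) * ((n - k).factorial : Real))) *
        Polynomial.X ^ k) *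
      Finset.prod (Finset.Icc (k + 1) n) fun j =>
        (Polynomial.X + Polynomial.C (Polynomial.C (j : Real)))

/-- The k-th derivative in the parameter z of the Laguerre polynomial, specialized at a
real value z, as a polynomial in x. -/
noncomputable def laguerreDz (n k : Nat) (z : Real) : Polynomial Real :=
  (Polynomial.derivative^[k] (laguerreBiv n)).eval (Polynomial.C z)

/-- Sturm-type lemma invariant. -/
theorem sturm_aux (N : ℕ) (q : ℕ → ℝ[X]) (hdeg : ∀ j ≤ N, (q j).natDegree ≤ j)
    (hlead : ∀ j ≤ N, 0 < (-1 : ℝ) ^ j * (q j).coeff j)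
    (h0 : ∀ j ≤ N, 0 < (q j).eval 0)
    (hs : ∀ j, j + 2 ≤ N → ∀ x : ℝ, 0 < x → (q (j+1)).eval x = 0 →
      (q j).eval x * (q (j+2)).eval x < 0) (j : ℕ) (hj : j + 1 ≤ N) :
    ∃ t : ℕ → ℝ, StrictMono t ∧ 0 < t 0 ∧ (∀ i ≤ j, (q (j+1)).eval (t i) = 0) ∧
      ∀ i ≤ j, 0 < (-1 : ℝ) ^ i * (q j).eval (t i) := by
  -- eventual sign
  have hinf : ∀ j ≤ N, ∀ M : ℝ, ∃ x, M < x ∧ 0 < (-1 : ℝ) ^ j * (q j).eval x := by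
    intro j hj M
    have hc : (q j).coeff j ≠ 0 := by
      intro h; have := hlead j hj; rw [h] at this; simp at this
    have hnd : (q j).natDegree = j := le_antisymm (hdeg j hj) (le_natDegree_of_ne_zero hc)
    rcases Nat.eq_zero_or_pos j with rfl | hjp
    · refine ⟨M+1, by linarith, ?_⟩
      have := hlead 0 hj
      rw [eq_C_of_natDegree_eq_zero hnd]
      simpa using this
    · have hnd' : (C ((-1:ℝ)^j) * q j).natDegree = j := by
        rw [natDegree_C_mul (by simp), hnd]
      have := tendsto_atTop_of_leadingCoeff_nonneg (C ((-1:ℝ)^j) * q j)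
        (natDegree_pos_iff_degree_pos.mp (by omega))
        (by rw [leadingCoeff, hnd', coeff_C_mul]; exact (hlead j hj).le)
      obtain ⟨x, hx1, hx2⟩ := ((Filter.eventually_gt_atTop M).and
        (this.eventually (Filter.eventually_gt_atTop 0))).exists
      exact ⟨x, hx1, by simpa using hx2⟩
  -- intermediate values
  have ivt : ∀ (p : ℝ[X]) (a b : ℝ), a < b → p.eval a * p.eval b < 0 →
      ∃ c, a < c ∧ c < b ∧ p.eval c = 0 := by
    intro p a b hab hp
    have hcont : ContinuousOn (fun x => p.eval x) (Set.Icc a b) := p.continuous.continuousOn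
    rcases mul_neg_iff.mp hp with ⟨h1, h2⟩ | ⟨h1, h2⟩
    · obtain ⟨c, ⟨hc1, hc2⟩, hc⟩ := intermediate_value_Ioo' hab.le hcont ⟨h2, h1⟩
      exact ⟨c, hc1, hc2, hc⟩
    · obtain ⟨c, ⟨hc1, hc2⟩, hc⟩ := intermediate_value_Ioo hab.le hcont ⟨h1, h2⟩
      exact ⟨c, hc1, hc2, hc⟩
  -- extend a finite strictly increasing sequence
  have ext : ∀ (m : ℕ) (u : ℕ → ℝ), (∀ i < m, u i < u (i+1)) →
      ∃ t : ℕ → ℝ, StrictMono t ∧ ∀ i ≤ m, t i = u i := by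
    intro m u hu
    refine ⟨fun i => if i ≤ m then u i else u m + (i - m), strictMono_nat_of_lt_succ ?_, ?_⟩
    · intro i
      by_cases h : i + 1 ≤ m
      · simp only [h, if_true, show i ≤ m by omega]; exact hu i (by omega)
      · by_cases h' : i ≤ m
        · have : i = m := by omega
          subst this; simp
        · simp only [h, h', if_false]; push_cast; linarith
    · intro i hi; simp [hi]
  induction j with
  | zero =>
    obtain ⟨M, hM, hM'⟩ := hinf 1 hj 0
    obtain ⟨c, hc1, hc2, hc⟩ := ivt (q 1) 0 M hM (by have := h0 1 hj; nlinarith)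
    refine ⟨fun i => c + i, fun a b h => by simpa using h, by simpa using hc1, ?_, ?_⟩
    · intro i hi; obtain rfl : i = 0 := by omega
      simpa using hc
    · intro i hi; obtain rfl : i = 0 := by omega
      have h1 := h0 0 (by omega)
      rw [eq_C_of_natDegree_eq_zero (Nat.le_zero.mp (hdeg 0 (by omega)))] at h1 ⊢
      simpa using h1
  | succ j ih =>
    obtain ⟨t, ht, ht0, htr, hts⟩ := ih (by omega)
    have htpos : ∀ i, 0 < t i := fun i => lt_of_lt_of_le ht0 (ht.monotone (Nat.zero_le i))
    -- signs of q (j+2) at t i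
    have hsg : ∀ i ≤ j, (-1 : ℝ) ^ i * (q (j+2)).eval (t i) < 0 := by
      intro i hi
      have h1 := hts i hi
      have h2 := hs j (by omega) (t i) (htpos i) (htr i hi)
      rcases neg_one_pow_eq_or ℝ i with h | h <;> rw [h] at h1 ⊢ <;> nlinarith
    -- new roots
    have hroot : ∀ i ≤ j + 1, ∃ u, (∀ l < i, t l < u) ∧ (∀ l, i ≤ l → l ≤ j → u < t l) ∧
        0 < u ∧ (q (j+2)).eval u = 0 := by
      intro i hi
      rcases Nat.eq_zero_or_pos i with rfl | hip
      · obtain ⟨c, h1, h2, h3⟩ := ivt (q (j+2)) 0 (t 0) ht0 (by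
          have := h0 (j+2) hj
          have := hsg 0 (by omega)
          simp at this; nlinarith)
        exact ⟨c, by simp, fun l _ _ => lt_of_lt_of_le h2 (ht.monotone (Nat.zero_le l)), h1, h3⟩
      · obtain ⟨i, rfl⟩ : ∃ i', i = i' + 1 := ⟨i - 1, by omega⟩
        have key : ∃ b, t i < b ∧ (∀ l, i + 1 ≤ l → l ≤ j → b ≤ t l) ∧
            (q (j+2)).eval (t i) * (q (j+2)).eval b < 0 := by
          have h1 := hsg i (by omega)
          by_cases hij : i + 1 ≤ j
          · refine ⟨t (i+1), ht (by omega), fun l hl _ => ht.monotone hl, ?_⟩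
            have h2 := hsg (i+1) hij
            rw [pow_succ] at h2
            rcases neg_one_pow_eq_or ℝ i with h | h <;> rw [h] at h1 h2 <;> nlinarith
          · obtain rfl : i = j := by omega
            obtain ⟨b, hb, hb'⟩ := hinf (i+2) hj (t i)
            refine ⟨b, hb, fun l hl hl' => by omega, ?_⟩
            rw [pow_add] at hb'
            rcases neg_one_pow_eq_or ℝ i with h | h <;> rw [h] at h1 hb' <;> nlinarith
        obtain ⟨b, hb, hbl, hbs⟩ := key
        obtain ⟨c, h1, h2, h3⟩ := ivt _ _ _ hb hbs
        exact ⟨c, fun l hl => lt_of_le_of_lt (ht.monotone (by omega)) h1,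
          fun l h h' => lt_of_lt_of_le h2 (hbl l h h'), (htpos i).trans h1, h3⟩
    choose! u hu1 hu2 hu3 hu4 using hroot
    obtain ⟨v, hv, hvu⟩ := ext (j+1) u (fun i hi =>
      (hu2 i (by omega) i le_rfl (by omega)).trans (hu1 (i+1) (by omega) i (by omega)))
    -- factorization of q (j+1)
    have hfac : ∃ c : ℝ, ∀ x, (q (j+1)).eval x = c * ∏ l ∈ range (j+1), (t l - x) := by
      have hq0 : q (j+1) ≠ 0 := by
        intro h; have := h0 (j+1) (by omega); rw [h] at this; simp at this
      have hdvd : (∏ l ∈ range (j+1), (X - C (t l))) ∣ q (j+1) := by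
        apply Finset.prod_dvd_of_coprime
        · intro a _ b _ hab
          exact isCoprime_X_sub_C_of_isUnit_sub (by
            have := ht.injective.ne hab
            exact (sub_ne_zero.mpr this).isUnit)
        · intro l hl
          exact dvd_iff_isRoot.mpr (htr l (by simp at hl; omega))
      obtain ⟨r, hr⟩ := hdvd
      have hr0 : r ≠ 0 := by rintro rfl; simp at hr; exact hq0 hr
      have hmon : (∏ l ∈ range (j+1), (X - C (t l))).Monic :=
        monic_prod_of_monic _ _ fun l _ => monic_X_sub_C _
      have hd := hdeg (j+1) (by omega)
      rw [hr, hmon.natDegree_mul' hr0, natDegree_prod_of_monic _ _ fun l _ => monic_X_sub_C _] at hd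
      simp at hd
      refine ⟨(-1)^(j+1) * r.coeff 0, fun x => ?_⟩
      rw [hr, eq_C_of_natDegree_eq_zero hd]
      simp only [eval_mul, eval_prod, eval_sub, eval_X, eval_C, coeff_C_zero]
      have : ∏ l ∈ range (j+1), (x - t l) = (-1)^(j+1) * ∏ l ∈ range (j+1), (t l - x) := by
        rw [← card_range (j+1), ← Finset.prod_const, card_range, ← Finset.prod_mul_distrib]
        exact Finset.prod_congr rfl fun l _ => by ring
      rw [this]; ring
    obtain ⟨c, hc⟩ := hfac
    have hcpos : 0 < c := by
      have h1 := h0 (j+1) (by omega)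
      rw [hc] at h1
      have h2 : 0 < ∏ l ∈ range (j+1), (t l - 0) :=
        Finset.prod_pos fun l _ => by simpa using htpos l
      exact (pos_iff_pos_of_mul_pos h1).mpr h2
    refine ⟨v, hv, by rw [hvu 0 (by omega)]; exact hu3 0 (by omega),
      fun i hi => by rw [hvu i hi]; exact hu4 i hi, fun i hi => ?_⟩
    rw [hvu i hi, hc]
    have hsplit : ∏ l ∈ range (j+1), (t l - u i)
        = (∏ l ∈ range i, (t l - u i)) * ∏ l ∈ Finset.Ico i (j+1), (t l - u i) :=
      (Finset.prod_range_mul_prod_Ico _ hi).symm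
    have hA : 0 < (-1 : ℝ)^i * ∏ l ∈ range i, (t l - u i) := by
      have : (-1 : ℝ)^i * ∏ l ∈ range i, (t l - u i) = ∏ l ∈ range i, (u i - t l) := by
        nth_rewrite 1 [← card_range i]
        rw [← Finset.prod_const, ← Finset.prod_mul_distrib]
        exact Finset.prod_congr rfl fun l _ => by ring
      rw [this]
      exact Finset.prod_pos fun l hl => sub_pos.mpr (hu1 i hi l (by simpa using hl))
    have hB : 0 < ∏ l ∈ Finset.Ico i (j+1), (t l - u i) :=
      Finset.prod_pos fun l hl => by
        simp at hl
        exact sub_pos.mpr (hu2 i hi l hl.1 (by omega))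
    rw [hsplit]
    have := mul_pos hcpos (mul_pos hA hB)
    linarith

theorem sturm (N : ℕ) (q : ℕ → ℝ[X]) (hdeg : ∀ j ≤ N, (q j).natDegree ≤ j)
    (hlead : ∀ j ≤ N, 0 < (-1 : ℝ) ^ j * (q j).coeff j)
    (h0 : ∀ j ≤ N, 0 < (q j).eval 0)
    (hs : ∀ j, j + 2 ≤ N → ∀ x : ℝ, 0 < x → (q (j+1)).eval x = 0 →
      (q j).eval x * (q (j+2)).eval x < 0) (j : ℕ) (hj : j ≤ N) :
    ∃ s : Finset ℝ, s.card = j ∧ ∀ x ∈ s, (q j).eval x = 0 := by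
  cases j with
  | zero => exact ⟨∅, by simp⟩
  | succ j =>
    obtain ⟨t, ht, -, h, -⟩ := sturm_aux N q hdeg hlead h0 hs j hj
    refine ⟨(range (j+1)).image t, ?_, ?_⟩
    · rw [card_image_of_injective _ ht.injective, card_range]
    · intro x hx
      obtain ⟨i, hi, rfl⟩ := Finset.mem_image.mp hx
      exact h i (by simp at hi; omega)

/-- p has natDegree at most d, with at least d distinct real roots -/
def FullRoots (p : ℝ[X]) (d : ℕ) : Prop := p ≠ 0 ∧ p.natDegree ≤ d ∧ d ≤ p.roots.toFinset.card

theorem FullRoots.of_finset {p : ℝ[X]} {d : ℕ} (hp : p ≠ 0) (hd : p.natDegree ≤ d)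
    (s : Finset ℝ) (hs : s.card = d) (h : ∀ x ∈ s, p.eval x = 0) : FullRoots p d := by
  refine ⟨hp, hd, ?_⟩
  rw [← hs]
  exact Finset.card_le_card fun x hx => by simp [hp, h x hx]

theorem FullRoots.all {p : ℝ[X]} {d : ℕ} (h : FullRoots p d) :
    p.natDegree = d ∧ p.roots.card = d ∧ p.roots.Nodup := by
  obtain ⟨hp, h1, h2⟩ := h
  have h3 := Multiset.toFinset_card_le p.roots
  have h4 := card_roots' p
  exact ⟨by omega, by omega, Multiset.toFinset_card_eq_card_iff_nodup.mp (by omega)⟩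

theorem FullRoots.derivative {p : ℝ[X]} {d : ℕ} (h : FullRoots p (d+1)) :
    FullRoots (derivative p) d := by
  have := h.all
  obtain ⟨hp, h1, h2⟩ := h
  refine ⟨?_, ?_, ?_⟩
  · intro h; have := Polynomial.derivative_eq_zero.mp h; omega
  · have := natDegree_derivative_le p; omega
  · have := card_roots_toFinset_le_derivative p; omega

theorem FullRoots.iterate {p : ℝ[X]} (m : ℕ) {d : ℕ} (h : FullRoots p (d+m)) :
    FullRoots (Polynomial.derivative^[m] p) d := by
  induction m generalizing p with
  | zero => simpa using h
  | succ m ih => rw [Function.iterate_succ_apply]; exact ih (FullRoots.derivative h)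

theorem laguerre_ineq (s : Multiset ℝ) (a : ℝ) (p : ℝ[X]) (hp : p = (s.map fun r => X - C r).prod) :
    p.eval a * (derivative (derivative p)).eval a - (derivative p).eval a ^ 2 ≤ 0 ∧
    (s ≠ 0 → p.eval a ≠ 0 →
      p.eval a * (derivative (derivative p)).eval a - (derivative p).eval a ^ 2 < 0) := by
  induction s using Multiset.induction_on generalizing p with
  | empty => subst hp; simp
  | cons r s ih =>
    obtain ⟨h1, -⟩ := ih _ rfl
    rw [Multiset.map_cons, Multiset.prod_cons] at hp
    set g := (s.map fun r => X - C r).prod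
    have e : p.eval a * (derivative (derivative p)).eval a - (derivative p).eval a ^ 2 =
        (a - r)^2 * (g.eval a * (derivative (derivative g)).eval a - (derivative g).eval a ^ 2)
        - g.eval a ^ 2 := by
      rw [hp]; simp [derivative_mul]; ring
    rw [e]
    constructor
    · nlinarith [mul_nonneg (sq_nonneg (a-r)) (neg_nonneg.mpr h1), sq_nonneg (g.eval a)]
    · intro _ hne
      have : g.eval a ≠ 0 := by
        intro h; apply hne; rw [hp]; simp [h]
      nlinarith [mul_nonneg (sq_nonneg (a-r)) (neg_nonneg.mpr h1), pow_pos (abs_pos.mpr this) 2, sq_abs (g.eval a)]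

theorem FullRoots.neg {p : ℝ[X]} {d : ℕ} (h : FullRoots p (d+1)) (a : ℝ)
    (ha : (Polynomial.derivative p).eval a = 0) :
    p.eval a * (Polynomial.derivative (Polynomial.derivative p)).eval a < 0 := by
  obtain ⟨h1, h2, h3⟩ := h.all
  have hp := h.1
  have hne : p.eval a ≠ 0 := by
    intro h0
    have := (one_lt_rootMultiplicity_iff_isRoot hp).mpr ⟨h0, ha⟩
    have h4 := Multiset.nodup_iff_count_le_one.mp h3 a
    rw [count_roots] at h4
    omega
  have hf := C_leadingCoeff_mul_prod_multiset_X_sub_C (p := p) (by rw [h1, h2])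
  have hs : p.roots ≠ 0 := by intro h; rw [h] at h2; simp at h2
  set g := (p.roots.map fun r => X - C r).prod with hg
  have hl : p.leadingCoeff ≠ 0 := leadingCoeff_ne_zero.mpr hp
  set c := p.leadingCoeff
  have key := (laguerre_ineq p.roots a g hg).2 hs (by
    intro h; apply hne; rw [← hf]; simp [h])
  rw [← hf] at ha ⊢
  simp only [derivative_C_mul, eval_mul, eval_C] at ha ⊢
  have ha' : (Polynomial.derivative g).eval a = 0 := by
    rcases mul_eq_zero.mp ha with h | h
    · exact absurd h hl
    · exact h
  rw [ha'] at key
  have : 0 < c^2 := by positivity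
  nlinarith

/-- signed Charlier-type polynomial -/
noncomputable def charl (a : ℝ) (n : ℕ) : ℝ[X] :=
  C ((-1 : ℝ) ^ n) * ∑ i ∈ range (n+1), C ((-a) ^ i / ((i.factorial : ℝ) * ((n-i).factorial : ℝ))) *
    ∏ l ∈ range (n-i), (X - C (l : ℝ))

theorem charl_rec (a y : ℝ) (n : ℕ) :
    ((n:ℝ)+2) * (charl a (n+2)).eval y = -(y - (n+1) - a) * (charl a (n+1)).eval y
      - a * (charl a n).eval y := by
  let A : PowerSeries ℝ := PowerSeries.mk fun i => (-a)^i / (i.factorial : ℝ)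
  let B : PowerSeries ℝ := PowerSeries.mk fun j => (∏ l ∈ range j, (y - (l:ℝ))) / (j.factorial : ℝ)
  have hev : ∀ m, (charl a m).eval y = (-1)^m * PowerSeries.coeff m (A * B) := by
    intro m
    rw [PowerSeries.coeff_mul, Finset.Nat.sum_antidiagonal_eq_sum_range_succ_mk]
    simp only [charl, eval_mul, eval_C, eval_finsetSum, eval_prod, eval_sub, eval_X, A, B,
      PowerSeries.coeff_mk]
    congr 1
    apply Finset.sum_congr rfl
    intro i _
    have := Nat.factorial_ne_zero i
    have := Nat.factorial_ne_zero (m-i)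
    field_simp
  have hA : PowerSeries.derivative ℝ A = PowerSeries.C (-a) * A := by
    ext i
    rw [PowerSeries.coeff_derivative, PowerSeries.coeff_C_mul]
    simp only [A, PowerSeries.coeff_mk, Nat.factorial_succ]
    have := Nat.factorial_ne_zero i
    push_cast; field_simp; ring
  have hB : (1 + PowerSeries.X) * PowerSeries.derivative ℝ B = PowerSeries.C y * B := by
    have hb : ∀ j, PowerSeries.coeff j (PowerSeries.derivative ℝ B)
        = (y - j) * PowerSeries.coeff j B := by
      intro j
      rw [PowerSeries.coeff_derivative]
      simp only [B, PowerSeries.coeff_mk, Nat.factorial_succ, Finset.prod_range_succ]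
      have := Nat.factorial_ne_zero j
      push_cast; field_simp
    ext j
    rw [add_mul, one_mul, map_add, PowerSeries.coeff_C_mul]
    cases j with
    | zero => rw [PowerSeries.coeff_zero_X_mul, hb]; simp
    | succ j =>
      rw [PowerSeries.coeff_succ_X_mul, hb, PowerSeries.coeff_derivative]
      push_cast; ring
  have hAB : (1 + PowerSeries.X) * PowerSeries.derivative ℝ (A * B)
      = PowerSeries.C (y - a) * (A * B) - PowerSeries.C a * (PowerSeries.X * (A * B)) := by
    rw [Derivation.leibniz, hA, smul_eq_mul, smul_eq_mul, mul_add,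
      show (1 + PowerSeries.X) * (A * PowerSeries.derivative ℝ B)
        = A * ((1 + PowerSeries.X) * PowerSeries.derivative ℝ B) by ring, hB]
    simp only [map_sub, map_neg]; ring
  have := congrArg (PowerSeries.coeff (n+1)) hAB
  rw [add_mul, one_mul, map_add, map_sub, PowerSeries.coeff_C_mul, PowerSeries.coeff_C_mul,
    PowerSeries.coeff_succ_X_mul, PowerSeries.coeff_succ_X_mul, PowerSeries.coeff_derivative,
    PowerSeries.coeff_derivative] at this
  rw [hev, hev, hev]
  push_cast at this
  rw [pow_add, pow_add]
  linear_combination (-1)^n * this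

theorem charl_natDegree (a : ℝ) (n : ℕ) : (charl a n).natDegree ≤ n := by
  refine (natDegree_C_mul_le _ _).trans (natDegree_sum_le_of_forall_le _ _ fun i _ => ?_)
  refine (natDegree_C_mul_le _ _).trans ?_
  rw [natDegree_prod_of_monic _ _ fun l _ => monic_X_sub_C _]
  simp only [natDegree_X_sub_C]
  simp

theorem charl_coeff (a : ℝ) (n : ℕ) : (charl a n).coeff n = (-1)^n / (n.factorial : ℝ) := by
  rw [charl, coeff_C_mul, finsetSum_coeff, Finset.sum_eq_single 0]
  · have hm : (∏ l ∈ range (n-0), (X - C (l : ℝ))).Monic :=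
      monic_prod_of_monic _ _ fun l _ => monic_X_sub_C _
    have hd : (∏ l ∈ range (n-0), (X - C (l : ℝ))).natDegree = n := by
      rw [natDegree_prod_of_monic _ _ fun l _ => monic_X_sub_C _]; simp only [natDegree_X_sub_C]; simp
    have := hm.coeff_natDegree
    rw [hd] at this
    rw [coeff_C_mul, this]; simp [div_eq_mul_inv]
  · intro i hi hi0
    rw [coeff_C_mul, coeff_eq_zero_of_natDegree_lt, mul_zero]
    rw [natDegree_prod_of_monic _ _ fun l _ => monic_X_sub_C _]
    simp only [natDegree_X_sub_C]
    simp at hi ⊢; omega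
  · simp

theorem charl_zero (a : ℝ) (n : ℕ) : (charl a n).eval 0 = a^n / (n.factorial : ℝ) := by
  rw [charl, eval_mul, eval_finsetSum, Finset.sum_eq_single n]
  · simp; rw [← mul_div_assoc, ← mul_pow]; simp
  · intro i hi hin
    simp only [eval_mul, eval_prod]
    rw [Finset.prod_eq_zero (i := 0), mul_zero]
    · simp at hi ⊢; omega
    · simp
  · simp

theorem charl_roots (a : ℝ) (ha : 0 < a) (n : ℕ) :
    ∃ s : Finset ℝ, s.card = n ∧ ∀ x ∈ s, (charl a n).eval x = 0 := by
  refine sturm n (charl a) (fun j _ => charl_natDegree a j) ?_ ?_ ?_ n le_rfl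
  · intro j _
    rw [charl_coeff, ← mul_div_assoc, ← mul_pow]; simp; positivity
  · intro j _; rw [charl_zero]; positivity
  · intro j hj x hx h
    have hr := charl_rec a x j
    have hr1 : (charl a j).eval x ≠ 0 := by
      intro h0
      have : ∀ i ≤ j, (charl a (j - i)).eval x = 0 ∧ (charl a (j - i + 1)).eval x = 0 := by
        intro i
        induction i with
        | zero => intro _; exact ⟨h0, h⟩
        | succ i ih =>
          intro hi
          obtain ⟨h1, h2⟩ := ih (by omega)
          have h3 := charl_rec a x (j - (i+1))
          rw [show j - (i+1) + 2 = j - i + 1 by omega, show j - (i+1) + 1 = j - i by omega,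
            h1, h2] at h3
          refine ⟨?_, by rw [show j - (i+1) + 1 = j - i by omega]; exact h1⟩
          simp at h3
          rcases h3 with h3 | h3
          · exact absurd h3 ha.ne'
          · exact h3
      have h4 := (this j le_rfl).1
      rw [Nat.sub_self] at h4
      simp [charl] at h4
    rw [h] at hr
    have h2 : 0 < (charl a j).eval x ^ 2 := by positivity
    have h3 : (0:ℝ) < j + 2 := by positivity
    have h4 : ((j:ℝ)+2) * ((charl a j).eval x * (charl a (j+2)).eval x) = -(a * (charl a j).eval x ^ 2) := by
      linear_combination (charl a j).eval x * hr
    by_contra hcon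
    push Not at hcon
    have := mul_nonneg h3.le hcon
    have := mul_pos ha h2
    linarith

/-- The product in z. -/
noncomputable def zprod (n i : ℕ) : ℝ[X] := ∏ j ∈ Finset.Icc (i+1) n, (X + C (j : ℝ))

theorem zprod_monic (n i : ℕ) : (zprod n i).Monic :=
  monic_prod_of_monic _ _ fun l _ => monic_X_add_C _

theorem zprod_natDegree (n i : ℕ) : (zprod n i).natDegree = n - i := by
  rw [zprod, natDegree_prod_of_monic _ _ fun l _ => monic_X_add_C _]
  simp only [natDegree_X_add_C]
  simp

theorem lag_map (n : ℕ) (x : ℝ) : (laguerreBiv n).map (evalRingHom x) =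
    ∑ i ∈ range (n+1), C ((-1 : ℝ) ^ i / ((i.factorial : ℝ) * ((n - i).factorial : ℝ)) * x^i) *
      zprod n i := by
  simp [laguerreBiv, Polynomial.map_sum, Polynomial.map_prod, zprod]

theorem lag_eval (n k : ℕ) (z x : ℝ) : (laguerreDz n k z).eval x =
    (derivative^[k] ((laguerreBiv n).map (evalRingHom x))).eval z := by
  have h := eval₂_at_apply (p := derivative^[k] (laguerreBiv n)) (evalRingHom x) (C z)
  rw [iterate_derivative_map, eval_map, laguerreDz]
  simpa using h.symm

theorem lag_poly (n k : ℕ) (z : ℝ) : laguerreDz n k z =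
    ∑ i ∈ range (n+1), C ((-1 : ℝ) ^ i / ((i.factorial : ℝ) * ((n - i).factorial : ℝ)) *
      (derivative^[k] (zprod n i)).eval z) * X^i := by
  apply Polynomial.funext
  intro x
  rw [lag_eval, lag_map, iterate_derivative_sum, eval_finsetSum, eval_finsetSum]
  apply Finset.sum_congr rfl
  intro i _
  rw [iterate_derivative_C_mul]
  simp; ring

theorem lag_coeff (n k : ℕ) (z : ℝ) (i : ℕ) (hi : i ≤ n) : (laguerreDz n k z).coeff i =
    (-1 : ℝ) ^ i / ((i.factorial : ℝ) * ((n - i).factorial : ℝ)) *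
      (derivative^[k] (zprod n i)).eval z := by
  rw [lag_poly, finsetSum_coeff, Finset.sum_eq_single i]
  · rw [coeff_C_mul_X_pow, if_pos rfl]
  · intro j _ hj; rw [coeff_C_mul_X_pow, if_neg hj.symm]
  · intro h; simp at h; omega

theorem lag_natDegree (n k : ℕ) (z : ℝ) : (laguerreDz n k z).natDegree ≤ n - k := by
  rw [lag_poly]
  refine natDegree_sum_le_of_forall_le _ _ fun i hi => ?_
  by_cases h : i ≤ n - k
  · exact (natDegree_C_mul_X_pow_le _ _).trans h
  · rw [iterate_derivative_eq_zero]
    · simp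
    · rw [zprod_natDegree]; simp at hi; omega

theorem zprod_deriv_nonneg (n : ℕ) (z : ℝ) (hz : -1 < z) : ∀ k,
    0 ≤ (derivative^[k] (zprod n 0)).eval z ∧ (k ≤ n → 0 < (derivative^[k] (zprod n 0)).eval z) := by
  induction n with
  | zero =>
    intro k
    cases k with
    | zero => simp [zprod]
    | succ k => rw [iterate_derivative_eq_zero (by rw [zprod_natDegree]; omega)]; simp
  | succ n ih =>
    have e : zprod (n+1) 0 = zprod n 0 * X + C ((n:ℝ)+1) * zprod n 0 := by
      rw [zprod, Finset.prod_Icc_succ_top (by omega), ← zprod]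
      push_cast; ring
    have hpos : 0 < z + (n + 1) := by have : (0:ℝ) ≤ n := by positivity
                                      linarith
    intro k
    rw [e, iterate_map_add, iterate_derivative_C_mul, iterate_derivative_mul_X]
    cases k with
    | zero =>
      have := (ih 0).2 (by omega)
      simp at this ⊢
      have h := mul_pos this hpos
      constructor <;> nlinarith
    | succ k =>
      have h1 := (ih (k+1)).1
      have h2 := (ih k)
      have h3 := mul_nonneg h1 hpos.le
      have h4 : (0:ℝ) < k + 1 := by positivity
      have h5 := mul_nonneg h4.le h2.1
      simp only [Nat.add_sub_cancel, eval_add, eval_mul, eval_X, eval_C, nsmul_eq_mul, eval_natCast]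
      push_cast
      constructor
      · linarith
      · intro hk
        have := mul_pos h4 (h2.2 (by omega))
        linarith

theorem lag_eval_zero (n k : ℕ) (hk : k ≤ n) (z : ℝ) (hz : -1 < z) :
    0 < (laguerreDz n k z).eval 0 := by
  rw [← coeff_zero_eq_eval_zero, lag_coeff _ _ _ _ (Nat.zero_le n)]
  have := (zprod_deriv_nonneg n z hz k).2 hk
  simp
  positivity

theorem lag_lead (n k : ℕ) (hk : k ≤ n) (z : ℝ) :
    0 < (-1 : ℝ)^(n-k) * (laguerreDz n k z).coeff (n-k) := by
  rw [lag_coeff _ _ _ _ (Nat.sub_le n k)]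
  have hd : (zprod n (n-k)).natDegree = k := by rw [zprod_natDegree]; omega
  have h1 : (derivative^[k] (zprod n (n-k))).eval z = k.factorial := by
    have h2 : (derivative^[k] (zprod n (n-k))).natDegree = 0 := by
      have := natDegree_iterate_derivative (zprod n (n-k)) k
      omega
    rw [eq_C_of_natDegree_eq_zero h2, eval_C, coeff_iterate_derivative]
    have := (zprod_monic n (n-k)).coeff_natDegree
    rw [hd] at this
    simp [this, Nat.descFactorial_self]
  rw [h1, ← mul_assoc, ← mul_div_assoc, ← mul_pow]
  simp
  positivity

theorem lag_fullRoots (n : ℕ) (x : ℝ) (hx : 0 < x) :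
    FullRoots ((laguerreBiv n).map (evalRingHom x)) n := by
  obtain ⟨s, hs, hr⟩ := charl_roots x hx n
  have hlink : ∀ y : ℝ, ((laguerreBiv n).map (evalRingHom x)).eval (y - n)
      = (-1)^n * (charl x n).eval y := by
    intro y
    rw [lag_map, charl, eval_mul, eval_C, ← mul_assoc, ← mul_pow, neg_one_mul, neg_neg, one_pow,
      one_mul, eval_finsetSum, eval_finsetSum]
    apply Finset.sum_congr rfl
    intro i hi
    rw [eval_mul, eval_mul, eval_C, eval_C, zprod, eval_prod, eval_prod, neg_pow x i]
    congr 1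
    · ring
    · refine Finset.prod_nbij' (fun j => n - j) (fun j => n - j) ?_ ?_ ?_ ?_ ?_
      · intro j hj; simp at hj ⊢; omega
      · intro j hj; simp at hi hj ⊢; omega
      · intro j hj; simp at hj ⊢; omega
      · intro j hj; simp at hj ⊢; omega
      · intro j hj
        simp at hj
        simp [Nat.cast_sub hj.2]; ring
  refine FullRoots.of_finset ?_ ?_ (s.image fun y => y - n) ?_ ?_
  · intro h
    have h1 := hlink 0
    rw [h, charl_zero] at h1
    have h2 : x ^ n / (n.factorial : ℝ) ≠ 0 := by positivity
    simp at h1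
    rcases h1 with h1 | h1
    · exact hx.ne' h1.1
    · exact Nat.factorial_ne_zero _ h1
  · rw [lag_map]
    refine natDegree_sum_le_of_forall_le _ _ fun i _ => ?_
    refine (natDegree_C_mul_le _ _).trans ?_
    rw [zprod_natDegree]; omega
  · rw [card_image_of_injective _ (sub_left_injective), hs]
  · intro r hr'
    obtain ⟨y, hy, rfl⟩ := Finset.mem_image.mp hr'
    rw [hlink, hr y hy, mul_zero]

/-- For z > -1 and k <= n, the polynomial in x obtained as the k-th z-derivative of L_n
has degree n - k and all of its roots are real and simple. -/
theorem laguerreDz_real_rooted (n k : Nat) (hk : k ≤ n) (z : Real) (hz : -1 < z) :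
    (laguerreDz n k z).natDegree = n - k ∧
    (laguerreDz n k z).roots.card = n - k ∧
    (laguerreDz n k z).roots.Nodup := by
  obtain ⟨s, hs, hr⟩ := sturm n (fun j => laguerreDz n (n-j) z)
    (fun j hj => by
      have := lag_natDegree n (n-j) z
      rwa [Nat.sub_sub_self hj] at this)
    (fun j hj => by
      have := lag_lead n (n-j) (Nat.sub_le _ _) z
      rwa [Nat.sub_sub_self hj] at this)
    (fun j hj => lag_eval_zero n (n-j) (Nat.sub_le _ _) z hz)
    (fun j hj x hx h => by
      simp only [lag_eval] at h ⊢
      have hf : FullRoots (derivative^[n-(j+2)] ((laguerreBiv n).map (evalRingHom x))) (j+1+1) :=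
        FullRoots.iterate _ (by
          rw [show j + 1 + 1 + (n - (j+2)) = n by omega]; exact lag_fullRoots n x hx)
      have e1 : n - (j+1) = (n - (j+2)) + 1 := by omega
      have e2 : n - j = (n - (j+2)) + 1 + 1 := by omega
      rw [e1, Function.iterate_succ_apply'] at h
      have := FullRoots.neg hf z h
      rw [e2, Function.iterate_succ_apply', Function.iterate_succ_apply', mul_comm]
      exact this)
    (n-k) (Nat.sub_le _ _)
  simp only [Nat.sub_sub_self hk] at hr
  refine (FullRoots.of_finset ?_ (lag_natDegree n k z) s hs hr).all
  intro h
  have := lag_eval_zero n k hk z hz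
  rw [h] at this
  simp at this
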